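/- arXiv:1201.4054 — 6 statements merged into one kernel-verified Lean document; each statement's English description precedes it below -/
import Mathlib

section
/- For every time t, one step of the exponential weighting algorithm satisfies log(W_{t+1}) - log(W_t) ≤ -η · ∑_{j=1}^{N} P_t j · ℓ j t + d_max² · η² / 8. -/
open MeasureTheory ProbabilityTheory in
/-- Hoeffding's lemma for a finitely supported distribution. -/
theorem hoeffding_fin {N : ℕ} (p x : Fin N → ℝ) (hp : ∀ j, 0 ≤ p j) (hs : ∑ j, p j = 1)
    (d : ℝ) (hd : 0 < d) (hx0 : ∀ j, 0 ≤ x j) (hxd : ∀ j, x j ≤ d) (s : ℝ) :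
    ∑ j, p j * Real.exp (s * x j) ≤ Real.exp (s * ∑ j, p j * x j + d ^ 2 * s ^ 2 / 8) := by
  let μ : Measure (Fin N) := ∑ j, ENNReal.ofReal (p j) • Measure.dirac j
  have hμ : IsProbabilityMeasure μ := by
    constructor
    simp only [μ, Measure.finsetSum_apply, Measure.smul_apply, measure_univ, smul_eq_mul, mul_one]
    rw [← ENNReal.ofReal_sum_of_nonneg (fun j _ => hp j), hs, ENNReal.ofReal_one]
  have hint : ∀ f : Fin N → ℝ, ∫ j, f j ∂μ = ∑ j, p j * f j := by
    intro f
    simp only [μ]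
    rw [integral_finsetSum_measure (fun j _ => (Integrable.of_finite (μ := Measure.dirac j)).smul_measure ENNReal.ofReal_ne_top)]
    refine Finset.sum_congr rfl fun j _ => ?_
    rw [integral_smul_measure, integral_dirac, ENNReal.toReal_ofReal (hp j), smul_eq_mul]
  have h := (hasSubgaussianMGF_of_mem_Icc (μ := μ) (X := x) (a := 0) (b := d)
    (measurable_of_finite x).aemeasurable
    (Filter.Eventually.of_forall fun j => ⟨hx0 j, hxd j⟩)).mgf_le s
  rw [mgf, hint, hint] at h
  set m := ∑ j, p j * x j with hm
  have h1 : ∑ j, p j * Real.exp (s * x j)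
      = Real.exp (s * m) * ∑ j, p j * Real.exp (s * (x j - m)) := by
    rw [Finset.mul_sum]
    refine Finset.sum_congr rfl fun j _ => ?_
    rw [mul_left_comm, ← Real.exp_add]
    congr 2
    ring
  rw [h1, Real.exp_add]
  refine mul_le_mul_of_nonneg_left (h.trans (le_of_eq ?_)) (Real.exp_pos _).le
  congr 1
  push_cast
  simp only [sub_zero, coe_nnnorm, Real.norm_eq_abs, abs_of_pos hd]
  ring

/-- One step of exponential weighting:
`log W_{t+1} - log W_t ≤ -η ∑_j P_t(j) ℓ j t + dmax² η² / 8`. -/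
theorem stmt_1 (N : ℕ) (hN : 1 ≤ N) (dmax : ℝ) (hdmax : 0 < dmax)
    (ℓ : Fin N → ℕ → ℝ) (hℓ0 : ∀ j t, 0 ≤ ℓ j t) (hℓd : ∀ j t, ℓ j t ≤ dmax)
    (η : ℝ) (hη : 0 < η)
    (L : Fin N → ℕ → ℝ) (hL : ∀ j t, L j t = ∑ s ∈ Finset.range t, ℓ j s)
    (W : ℕ → ℝ) (hW : ∀ t, W t = ∑ j : Fin N, Real.exp (-η * L j t))
    (P : ℕ → Fin N → ℝ) (hP : ∀ t j, P t j = Real.exp (-η * L j t) / W t)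
    (t : ℕ) :
    Real.log (W (t + 1)) - Real.log (W t) ≤
      -η * ∑ j : Fin N, P t j * ℓ j t + dmax ^ 2 * η ^ 2 / 8 := by
  haveI : Nonempty (Fin N) := ⟨⟨0, hN⟩⟩
  have hWpos : ∀ t, 0 < W t := fun t => by
    rw [hW]
    exact Finset.sum_pos (fun j _ => Real.exp_pos _) Finset.univ_nonempty
  have h := hoeffding_fin (P t) (fun j => ℓ j t)
    (fun j => by rw [hP]; exact div_nonneg (Real.exp_pos _).le (hWpos t).le)
    (by simp only [hP]; rw [← Finset.sum_div, ← hW, div_self (hWpos t).ne'])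
    dmax hdmax (fun j => hℓ0 j t) (fun j => hℓd j t) (-η)
  have h2 : ∑ j, P t j * Real.exp (-η * ℓ j t) = W (t + 1) / W t := by
    rw [hW (t + 1), Finset.sum_div]
    refine Finset.sum_congr rfl fun j _ => ?_
    rw [hP, div_mul_eq_mul_div, ← Real.exp_add, hL j (t + 1), Finset.sum_range_succ, ← hL]
    congr 2
    ring
  rw [← Real.log_div (hWpos _).ne' (hWpos _).ne',
    Real.log_le_iff_le_exp (div_pos (hWpos _) (hWpos _)), ← h2]
  simpa using h
end

section
/- (Finite Hoeffding-type lemma.) Let q : Fin N → ℝ be a probability vector (q j ≥ 0, ∑_j q j = 1) and let x : Fin N → ℝ take values in a bounded interval [a, a + R] with R ≥ 0. Then log(∑_j q j · exp(x j)) ≤ ∑_j q j · x j + R² / 8. -/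
/-- Finite Hoeffding-type lemma: for a probability vector `q` on `Fin N` and values
`x j` in a bounded interval `[a, a + R]`,
`log (∑ j, q j * exp (x j)) ≤ ∑ j, q j * x j + R² / 8`. -/
theorem stmt_2 (N : ℕ) (q : Fin N → ℝ) (hq0 : ∀ j, 0 ≤ q j)
    (hq1 : ∑ j : Fin N, q j = 1)
    (x : Fin N → ℝ) (a R : ℝ) (hR : 0 ≤ R)
    (hx : ∀ j, x j ∈ Set.Icc a (a + R)) :
    Real.log (∑ j : Fin N, q j * Real.exp (x j)) ≤
      (∑ j : Fin N, q j * x j) + R ^ 2 / 8 := by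
  classical
  have hsum : ∑ j : Fin N, ENNReal.ofReal (q j) = 1 := by
    rw [← ENNReal.ofReal_sum_of_nonneg (fun j _ => hq0 j), hq1, ENNReal.ofReal_one]
  let p : PMF (Fin N) := PMF.ofFintype (fun j => ENNReal.ofReal (q j)) hsum
  have hint : ∀ f : Fin N → ℝ, ∫ j, f j ∂p.toMeasure = ∑ j, q j * f j := by
    intro f
    rw [PMF.integral_eq_sum]
    refine Finset.sum_congr rfl fun j _ => ?_
    simp [p, PMF.ofFintype_apply, ENNReal.toReal_ofReal (hq0 j)]
  have h := (ProbabilityTheory.hasSubgaussianMGF_of_mem_Icc (μ := p.toMeasure) (X := x)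
    (a := a) (b := a + R) (measurable_of_finite x).aemeasurable
    (Filter.Eventually.of_forall hx)).mgf_le 1
  rw [ProbabilityTheory.mgf, hint, hint] at h
  set m := ∑ j, q j * x j with hm
  have e1 : ∑ j, q j * Real.exp (1 * (x j - m))
      = (∑ j, q j * Real.exp (x j)) * Real.exp (-m) := by
    rw [Finset.sum_mul]
    refine Finset.sum_congr rfl fun j _ => ?_
    rw [mul_assoc, ← Real.exp_add]
    congr 2
    ring
  have e2 : (((‖a + R - a‖₊ / 2) ^ 2 : NNReal) : ℝ) * 1 ^ 2 / 2 = R ^ 2 / 8 := by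
    push_cast
    rw [add_sub_cancel_left, Real.norm_eq_abs, div_pow, sq_abs]
    ring
  rw [e1, e2] at h
  have hpos : 0 < ∑ j, q j * Real.exp (x j) := by
    have : Real.exp a ≤ ∑ j, q j * Real.exp (x j) := by
      rw [← one_mul (Real.exp a), ← hq1, Finset.sum_mul]
      exact Finset.sum_le_sum fun j _ =>
        mul_le_mul_of_nonneg_left (Real.exp_le_exp.2 (hx j).1) (hq0 j)
    exact lt_of_lt_of_le (Real.exp_pos a) this
  rw [Real.log_le_iff_le_exp hpos, Real.exp_add]
  calc _ = Real.exp m * ((∑ j, q j * Real.exp (x j)) * Real.exp (-m)) := by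
        rw [mul_comm, mul_assoc, ← Real.exp_add]; simp
    _ ≤ _ := mul_le_mul_of_nonneg_left h (Real.exp_pos m).le
end

section
/- For every learning rate η > 0 and every horizon n ≥ 1, the expected normalized cumulative loss of the exponential weighting algorithm satisfies (1/n) · A_n ≤ min_{1 ≤ j ≤ N} (1/n) · L j n + log N / (n · η) + d_max² · η / 8. -/
open MeasureTheory ProbabilityTheory in
lemma hoeffding_finite {N : ℕ} (p x : Fin N → ℝ) (hp : ∀ j, 0 ≤ p j) (hs : ∑ j, p j = 1)
    (d : ℝ) (hx0 : ∀ j, 0 ≤ x j) (hxd : ∀ j, x j ≤ d) (η : ℝ) :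
    ∑ j, p j * Real.exp (-η * x j) ≤ Real.exp (-η * ∑ j, p j * x j + d ^ 2 * η ^ 2 / 8) := by
  let q : PMF (Fin N) := PMF.ofFintype (fun j => ENNReal.ofReal (p j)) (by
    rw [← ENNReal.ofReal_sum_of_nonneg (fun j _ => hp j), hs, ENNReal.ofReal_one])
  have hq : ∀ j, (q j).toReal = p j := fun j => by
    simp [q, PMF.ofFintype_apply, ENNReal.toReal_ofReal (hp j)]
  have hint : ∀ f : Fin N → ℝ, ∫ j, f j ∂q.toMeasure = ∑ j, p j * f j := fun f => by
    rw [PMF.integral_eq_sum]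
    simp [hq]
  have h := (hasSubgaussianMGF_of_mem_Icc (μ := q.toMeasure) (X := x) (a := 0) (b := d)
    (measurable_of_finite x).aemeasurable
    (Filter.Eventually.of_forall fun j => ⟨hx0 j, hxd j⟩)).mgf_le (-η)
  rw [mgf, hint, hint] at h
  have e : ∑ j, p j * Real.exp (-η * x j)
      = Real.exp (-η * ∑ j, p j * x j)
        * ∑ j, p j * Real.exp (-η * (x j - ∑ j, p j * x j)) := by
    rw [Finset.mul_sum]
    refine Finset.sum_congr rfl fun j _ => ?_
    rw [mul_left_comm, ← Real.exp_add]
    ring_nf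
  rw [e, Real.exp_add]
  refine mul_le_mul_of_nonneg_left (h.trans (le_of_eq ?_)) (Real.exp_pos _).le
  congr 1
  simp [div_pow]
  ring

/-- Regret bound of exponential weighting for any learning rate `η > 0`:
`(1/n) A_n ≤ min_j (1/n) L j n + log N / (n η) + dmax² η / 8`. -/
theorem stmt_3 (N : ℕ) (hN : 1 ≤ N) (dmax : ℝ) (hdmax : 0 < dmax)
    (ℓ : Fin N → ℕ → ℝ) (hℓ0 : ∀ j t, 0 ≤ ℓ j t) (hℓd : ∀ j t, ℓ j t ≤ dmax)
    (η : ℝ) (hη : 0 < η)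
    (L : Fin N → ℕ → ℝ) (hL : ∀ j t, L j t = ∑ s ∈ Finset.range t, ℓ j s)
    (W : ℕ → ℝ) (hW : ∀ t, W t = ∑ j : Fin N, Real.exp (-η * L j t))
    (P : ℕ → Fin N → ℝ) (hP : ∀ t j, P t j = Real.exp (-η * L j t) / W t)
    (A : ℕ → ℝ) (hA : ∀ n, A n = ∑ t ∈ Finset.range n, ∑ j : Fin N, P t j * ℓ j t)
    (n : ℕ) (hn : 1 ≤ n) :
    (1 / n : ℝ) * A n ≤
      (Finset.univ.inf' (Finset.univ_nonempty_iff.mpr ⟨⟨0, hN⟩⟩)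
          fun j => (1 / n : ℝ) * L j n)
        + Real.log N / (n * η) + dmax ^ 2 * η / 8 := by
  have hWpos : ∀ t, 0 < W t := fun t => by
    rw [hW]
    exact Finset.sum_pos (fun j _ => Real.exp_pos _) ⟨⟨0, hN⟩, Finset.mem_univ _⟩
  have hP0 : ∀ t j, 0 ≤ P t j := fun t j => by
    rw [hP]
    exact div_nonneg (Real.exp_pos _).le (hWpos t).le
  have hP1 : ∀ t, ∑ j, P t j = 1 := fun t => by
    simp only [hP]
    rw [← Finset.sum_div, ← hW, div_self (hWpos t).ne']
  have hstep : ∀ t, W (t + 1) = W t * ∑ j, P t j * Real.exp (-η * ℓ j t) := fun t => by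
    rw [hW (t + 1), Finset.mul_sum]
    refine Finset.sum_congr rfl fun j _ => ?_
    rw [hP, ← mul_assoc, mul_div_cancel₀ _ (hWpos t).ne', ← Real.exp_add, hL, hL,
      Finset.sum_range_succ, mul_add]
  have hbound : ∀ m : ℕ, W m ≤ N * Real.exp (-η * A m + m * (dmax ^ 2 * η ^ 2 / 8)) := by
    intro m
    induction m with
    | zero => simp [hW, hL, hA]
    | succ m ih =>
      have hh := hoeffding_finite (P m) (fun j => ℓ j m) (hP0 m) (hP1 m) dmax
        (fun j => hℓ0 j m) (fun j => hℓd j m) η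
      have hA' : A (m + 1) = A m + ∑ j, P m j * ℓ j m := by
        rw [hA, hA, Finset.sum_range_succ]
      rw [hstep]
      refine (mul_le_mul ih hh
        (Finset.sum_nonneg fun j _ => mul_nonneg (hP0 m j) (Real.exp_pos _).le)
        (by positivity)).trans (le_of_eq ?_)
      rw [mul_assoc, ← Real.exp_add, hA']
      push_cast
      ring_nf
  have hn0 : (0 : ℝ) < n := by exact_mod_cast hn
  have hN0 : (0 : ℝ) < N := by exact_mod_cast hN
  obtain ⟨j, -, hj⟩ := Finset.exists_mem_eq_inf' (Finset.univ_nonempty_iff.mpr ⟨⟨0, hN⟩⟩)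
    (fun j : Fin N => (1 / n : ℝ) * L j n)
  rw [hj]
  have h1 : Real.exp (-η * L j n) ≤ N * Real.exp (-η * A n + n * (dmax ^ 2 * η ^ 2 / 8)) := by
    refine le_trans ?_ (hbound n)
    rw [hW]
    exact Finset.single_le_sum (f := fun j => Real.exp (-η * L j n))
      (fun i _ => (Real.exp_pos _).le) (Finset.mem_univ j)
  have h2 := Real.log_le_log (Real.exp_pos _) h1
  rw [Real.log_mul hN0.ne' (Real.exp_pos _).ne', Real.log_exp, Real.log_exp] at h2
  have h3 : (1 / n : ℝ) * L j n + Real.log N / (n * η) + dmax ^ 2 * η / 8 - (1 / n : ℝ) * A n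
      = (Real.log N + (-η * A n + n * (dmax ^ 2 * η ^ 2 / 8)) - (-η * L j n)) / (n * η) := by
    field_simp
    ring
  have h4 : 0 ≤ (Real.log N + (-η * A n + n * (dmax ^ 2 * η ^ 2 / 8)) - (-η * L j n)) / (n * η) :=
    div_nonneg (by linarith) (by positivity)
  linarith
end

section
/- (Submodularity of empirical joint entropy.) For all subsets I, J ⊆ Fin K, the empirical joint entropies satisfy h(I) + h(J) ≥ h(I ∪ J) + h(I ∩ J). Together with h(∅) = 0 and monotonicity, the vector of joint empirical entropies of every realization of the sensors' data defines a polymatroid rank function on the ground set of K sensors. -/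
noncomputable def cnt8 {A : Type*} [DecidableEq A] {K n : ℕ} (p : Fin K → Fin n → A)
    (S : Finset (Fin K)) (t : Fin n) : ℝ :=
  ((Finset.univ.filter fun t' : Fin n => ∀ j ∈ S, p j t' = p j t).card : ℝ)

section
variable {A : Type*} [DecidableEq A] {K n : ℕ} (p : Fin K → Fin n → A)

lemma cnt8_pos (S : Finset (Fin K)) (t : Fin n) : 0 < cnt8 p S t := by
  unfold cnt8
  exact_mod_cast Finset.card_pos.mpr ⟨t, by simp⟩

lemma cnt8_eq_sum (S : Finset (Fin K)) (t : Fin n) :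
    cnt8 p S t = ∑ a : Fin n, if ∀ j ∈ S, p j a = p j t then (1 : ℝ) else 0 := by
  simp [cnt8]

lemma cnt8_congr (S : Finset (Fin K)) {s t : Fin n} (hst : ∀ j ∈ S, p j s = p j t) :
    cnt8 p S s = cnt8 p S t := by
  unfold cnt8
  congr 2
  ext a
  simp only [Finset.mem_filter, Finset.mem_univ, true_and]
  exact forall₂_congr fun j hj => by rw [hst j hj]

lemma cnt8_anti {I J : Finset (Fin K)} (hIJ : I ⊆ J) (t : Fin n) :
    cnt8 p J t ≤ cnt8 p I t := by
  unfold cnt8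
  norm_cast
  apply Finset.card_le_card
  intro a
  simp only [Finset.mem_filter, Finset.mem_univ, true_and]
  exact fun h j hj => h j (hIJ hj)

lemma ent8 [Fintype A] (S : Finset (Fin K)) :
    (∑ w : S → A, Real.negMulLog
        (((Finset.univ.filter fun t : Fin n =>
            ∀ j (hj : j ∈ S), p j t = w ⟨j, hj⟩).card : ℝ) / n))
      = ∑ t : Fin n, -((1 / n : ℝ) * Real.log (cnt8 p S t / n)) := by
  have key : ∀ w : S → A, Real.negMulLog
        (((Finset.univ.filter fun t : Fin n =>
            ∀ j (hj : j ∈ S), p j t = w ⟨j, hj⟩).card : ℝ) / n)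
      = ∑ t : Fin n, if (fun j : S => p j.1 t) = w then
          -((1 / n : ℝ) * Real.log (cnt8 p S t / n)) else 0 := by
    intro w
    have h1 : ∀ t : Fin n, (if (fun j : S => p j.1 t) = w then
          -((1 / n : ℝ) * Real.log (cnt8 p S t / n)) else 0)
        = (if ∀ j (hj : j ∈ S), p j t = w ⟨j, hj⟩ then (1 : ℝ) else 0) *
          -((1 / n : ℝ) * Real.log (((Finset.univ.filter fun t : Fin n =>
            ∀ j (hj : j ∈ S), p j t = w ⟨j, hj⟩).card : ℝ) / n)) := by
      intro t
      by_cases hw : (fun j : S => p j.1 t) = w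
      · subst hw
        simp [cnt8]
      · rw [if_neg hw, if_neg, zero_mul]
        exact fun h => hw (funext fun j => h j.1 j.2)
    rw [Finset.sum_congr rfl fun t _ => h1 t, ← Finset.sum_mul, Finset.sum_boole,
      Real.negMulLog]
    ring
  rw [Finset.sum_congr rfl fun w _ => key w, Finset.sum_comm]
  simp

lemma ratio8 (I J : Finset (Fin K)) :
    ∑ t : Fin n, cnt8 p I t * cnt8 p J t / (cnt8 p (I ∪ J) t * cnt8 p (I ∩ J) t) ≤ n := by
  have e : ∀ t : Fin n,
      cnt8 p I t * cnt8 p J t / (cnt8 p (I ∪ J) t * cnt8 p (I ∩ J) t)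
      = ∑ a : Fin n, ∑ b : Fin n,
        (if (∀ j ∈ I, p j a = p j t) ∧ (∀ j ∈ J, p j b = p j t) then
          1 / (cnt8 p (I ∪ J) t * cnt8 p (I ∩ J) t) else 0) := by
    intro t
    rw [cnt8_eq_sum p I t, cnt8_eq_sum p J t, Finset.sum_mul_sum, Finset.sum_div]
    refine Finset.sum_congr rfl fun a _ => ?_
    rw [Finset.sum_div]
    refine Finset.sum_congr rfl fun b _ => ?_
    rw [ite_and]
    split_ifs <;> simp
  rw [Finset.sum_congr rfl fun t _ => e t, Finset.sum_comm]
  have bound : ∀ a b : Fin n, (∑ t : Fin n,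
        (if (∀ j ∈ I, p j a = p j t) ∧ (∀ j ∈ J, p j b = p j t) then
          1 / (cnt8 p (I ∪ J) t * cnt8 p (I ∩ J) t) else 0))
      ≤ (if ∀ j ∈ I ∩ J, p j b = p j a then (1 : ℝ) else 0) * (1 / cnt8 p (I ∩ J) a) := by
    intro a b
    by_cases hex : ∃ s : Fin n, (∀ j ∈ I, p j a = p j s) ∧ (∀ j ∈ J, p j b = p j s)
    · obtain ⟨s, ha, hb⟩ := hex
      have hc : cnt8 p (I ∩ J) a = cnt8 p (I ∩ J) s :=
        cnt8_congr p _ fun j hj => ha j (Finset.mem_inter.mp hj).1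
      have h1 : ∀ j ∈ I ∩ J, p j b = p j a := fun j hj => by
        rw [Finset.mem_inter] at hj
        rw [ha j hj.1, hb j hj.2]
      rw [if_pos h1, one_mul, hc]
      have h2 : ∀ t : Fin n, (if (∀ j ∈ I, p j a = p j t) ∧ (∀ j ∈ J, p j b = p j t) then
          1 / (cnt8 p (I ∪ J) t * cnt8 p (I ∩ J) t) else 0)
          = (if ∀ j ∈ I ∪ J, p j t = p j s then (1 : ℝ) else 0) *
            (1 / (cnt8 p (I ∪ J) s * cnt8 p (I ∩ J) s)) := by
        intro t
        by_cases ht : ∀ j ∈ I ∪ J, p j t = p j s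
        · rw [if_pos ht, if_pos, one_mul, cnt8_congr p _ ht,
            cnt8_congr p (I ∩ J) (s := t) (t := s)
              fun j hj => ht j (Finset.mem_union_left _ (Finset.mem_inter.mp hj).1)]
          exact ⟨fun j hj => by rw [ha j hj, ht j (Finset.mem_union_left _ hj)],
            fun j hj => by rw [hb j hj, ht j (Finset.mem_union_right _ hj)]⟩
        · rw [if_neg ht, if_neg, zero_mul]
          rintro ⟨h3, h4⟩
          apply ht
          intro j hj
          rcases Finset.mem_union.mp hj with hj | hj
          · rw [← h3 j hj, ha j hj]
          · rw [← h4 j hj, hb j hj]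
      rw [Finset.sum_congr rfl fun t _ => h2 t, ← Finset.sum_mul, ← cnt8_eq_sum]
      have := cnt8_pos p (I ∪ J) s
      have := cnt8_pos p (I ∩ J) s
      apply le_of_eq
      field_simp
    · rw [Finset.sum_eq_zero]
      · have := cnt8_pos p (I ∩ J) a
        split_ifs <;> positivity
      · intro t _
        rw [if_neg]
        exact fun h => hex ⟨t, h⟩
  calc _ ≤ ∑ a : Fin n, (1 : ℝ) := by
        refine Finset.sum_le_sum fun a _ => ?_
        rw [Finset.sum_comm]
        refine (Finset.sum_le_sum fun b _ => bound a b).trans ?_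
        rw [← Finset.sum_mul, ← cnt8_eq_sum]
        have := cnt8_pos p (I ∩ J) a
        apply le_of_eq
        field_simp
    _ = n := by simp

end

/-- Submodularity of empirical joint entropy: `h(I) + h(J) ≥ h(I ∪ J) + h(I ∩ J)`.
Together with `h(∅) = 0` and monotonicity, the vector of joint empirical entropies of
every realization of the sensors' data defines a polymatroid rank function on the
ground set of `K` sensors. -/
theorem stmt_8 (A : Type*) [Fintype A] [DecidableEq A] [Nonempty A]
    (K n : ℕ) (hK : 1 ≤ K) (hn : 1 ≤ n)
    (p : Fin K → Fin n → A)
    (h : Finset (Fin K) → ℝ)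
    (hh : ∀ S : Finset (Fin K), h S = ∑ w : S → A,
      Real.negMulLog
        (((Finset.univ.filter fun t : Fin n =>
            ∀ j (hj : j ∈ S), p j t = w ⟨j, hj⟩).card : ℝ) / n)) :
    (∀ I J : Finset (Fin K), h I + h J ≥ h (I ∪ J) + h (I ∩ J)) ∧
      h ∅ = 0 ∧
      (∀ I J : Finset (Fin K), I ⊆ J → h I ≤ h J) := by
  have hn0 : (0 : ℝ) < n := by exact_mod_cast hn
  have hS : ∀ S, h S = ∑ t : Fin n, -((1 / n : ℝ) * Real.log (cnt8 p S t / n)) :=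
    fun S => (hh S).trans (ent8 p S)
  refine ⟨fun I J => ?_, ?_, fun I J hIJ => ?_⟩
  · rw [hS, hS, hS, hS, ← Finset.sum_add_distrib, ← Finset.sum_add_distrib, ge_iff_le,
      ← sub_nonneg, ← Finset.sum_sub_distrib]
    have h1 : ∀ t : Fin n, (1 / n : ℝ) * (1 -
        cnt8 p I t * cnt8 p J t / (cnt8 p (I ∪ J) t * cnt8 p (I ∩ J) t)) ≤
        -((1 / n : ℝ) * Real.log (cnt8 p I t / n)) + -((1 / n : ℝ) * Real.log (cnt8 p J t / n))
        - (-((1 / n : ℝ) * Real.log (cnt8 p (I ∪ J) t / n)) +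
          -((1 / n : ℝ) * Real.log (cnt8 p (I ∩ J) t / n))) := by
      intro t
      have a1 := cnt8_pos p I t
      have a2 := cnt8_pos p J t
      have a3 := cnt8_pos p (I ∪ J) t
      have a4 := cnt8_pos p (I ∩ J) t
      have h2 := Real.log_le_sub_one_of_pos (x := cnt8 p I t * cnt8 p J t /
        (cnt8 p (I ∪ J) t * cnt8 p (I ∩ J) t)) (by positivity)
      rw [Real.log_div (by positivity) (by positivity), Real.log_mul a1.ne' a2.ne',
        Real.log_mul a3.ne' a4.ne'] at h2
      rw [Real.log_div a1.ne' hn0.ne', Real.log_div a2.ne' hn0.ne', Real.log_div a3.ne' hn0.ne',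
        Real.log_div a4.ne' hn0.ne']
      have h3 : (0 : ℝ) ≤ 1 / n := by positivity
      have h4 := mul_le_mul_of_nonneg_left h2 h3
      linarith
    refine le_trans ?_ (Finset.sum_le_sum fun t _ => h1 t)
    rw [← Finset.mul_sum, Finset.sum_sub_distrib]
    have := ratio8 p I J
    apply mul_nonneg (by positivity)
    simp only [Finset.sum_const, Finset.card_univ, Fintype.card_fin, nsmul_eq_mul, mul_one]
    linarith
  · rw [hS]
    apply Finset.sum_eq_zero
    intro t _
    have : cnt8 p ∅ t = n := by simp [cnt8]
    rw [this, div_self hn0.ne']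
    simp
  · rw [hS, hS]
    refine Finset.sum_le_sum fun t _ => ?_
    have := cnt8_pos p J t
    have := cnt8_anti p hIJ t
    gcongr
end

section
/- (Greedy step bound for an approximately submodular estimate.) Let ι be a finite type, let f : Finset ι → ℝ be submodular, and let g : Finset ι → ℝ satisfy |g(S) - f(S)| ≤ δ for all finsets S, where δ ≥ 0 (g models the Lempel–Ziv entropy estimate, which approximates the true entropies f up to δ). Let I be a finset and j* ∉ I an element maximizing g(I ∪ {j}) over j ∉ I, and suppose g(I ∪ {j*}) ≤ g(I) + ε for some ε ≥ 0. Then for every j' ∉ I ∪ {j*}, g(I ∪ {j*} ∪ {j'}) ≤ g(I ∪ {j*}) + ε + 4δ. -/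
/-- Greedy step bound for an approximately submodular estimate: if `g` (the
Lempel–Ziv entropy estimate) is within `δ` of a submodular `f` (the true entropies),
`j* ∉ I` maximizes `g(I ∪ {j})` over `j ∉ I`, and `g(I ∪ {j*}) ≤ g(I) + ε`, then for
every `j' ∉ I ∪ {j*}`, `g(I ∪ {j*} ∪ {j'}) ≤ g(I ∪ {j*}) + ε + 4δ`. -/
theorem stmt_14 (ι : Type*) [Fintype ι] [DecidableEq ι]
    (f g : Finset ι → ℝ)
    (hsub : ∀ I J : Finset ι, f I + f J ≥ f (I ∪ J) + f (I ∩ J))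
    (δ : ℝ) (hδ : 0 ≤ δ) (happrox : ∀ S : Finset ι, |g S - f S| ≤ δ)
    (I : Finset ι) (jstar : ι) (hjstar : jstar ∉ I)
    (hmax : ∀ j ∉ I, g (I ∪ {j}) ≤ g (I ∪ {jstar}))
    (ε : ℝ) (hε : 0 ≤ ε) (hstep : g (I ∪ {jstar}) ≤ g I + ε) :
    ∀ j' ∉ I ∪ {jstar},
      g (I ∪ {jstar} ∪ {j'}) ≤ g (I ∪ {jstar}) + ε + 4 * δ := by
  intro k hk
  have hj : k ∉ I ∧ k ≠ jstar := by
    simpa [and_comm] using hk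
  have hu : (I ∪ {jstar}) ∪ (I ∪ {k}) = I ∪ {jstar} ∪ {k} := by
    ext x
    simp only [Finset.mem_union, Finset.mem_singleton]
    tauto
  have hi : (I ∪ {jstar}) ∩ (I ∪ {k}) = I := by
    ext x
    simp only [Finset.mem_union, Finset.mem_inter, Finset.mem_singleton]
    constructor
    · rintro ⟨h | h, h2 | h2⟩
      · exact h
      · exact h
      · exact h2
      · exact absurd (h2.symm.trans h) hj.2
    · intro h
      exact ⟨Or.inl h, Or.inl h⟩
  have h := hsub (I ∪ {jstar}) (I ∪ {k})
  rw [hu, hi] at h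
  have h1 := abs_le.mp (happrox (I ∪ {jstar}))
  have h2 := abs_le.mp (happrox (I ∪ {k}))
  have h3 := abs_le.mp (happrox (I ∪ {jstar} ∪ {k}))
  have h4 := abs_le.mp (happrox I)
  have h5 := hmax k hj.1
  linarith [h1.1, h2.1, h3.2, h4.2]
end

section
/- (Early stopping of greedy selection with estimation error.) Let ι be a finite type, let f : Finset ι → ℝ be submodular, and let g : Finset ι → ℝ satisfy |g(S) - f(S)| ≤ δ for all finsets S, where δ ≥ 0. Let I be a finset and ε ≥ 0, and suppose g(I ∪ {j}) ≤ g(I) + ε for every j ∉ I (the greedy algorithm run on g stopped at I because no single element improves the estimate by more than ε). Then for every finset J with I ⊆ J, g(J) ≤ g(I) + |J \ I| · (ε + 2δ) + 2δ. In particular, with at most |ι| elements in total, the estimated entropy of any set reachable by continuing the algorithm exceeds that of the currently selected subset by at most |ι| · (ε + 2δ) + 2δ, i.e. by |ι| · ε plus a term that vanishes as the estimation error δ → 0. -/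
/-- Early stopping of greedy selection with estimation error: if `g` is within `δ` of
a submodular `f` and no single element improves `g` at `I` by more than `ε`, then for
every `J ⊇ I`, `g(J) ≤ g(I) + |J \ I| (ε + 2δ) + 2δ`; with at most `|ι|` elements in
total, the estimated entropy of any set reachable by continuing the algorithm exceeds
that of the currently selected subset by at most `|ι| ε` plus a term vanishing as
`δ → 0`. -/
theorem stmt_15 (ι : Type*) [Fintype ι] [DecidableEq ι]
    (f g : Finset ι → ℝ)
    (hsub : ∀ I J : Finset ι, f I + f J ≥ f (I ∪ J) + f (I ∩ J))
    (δ : ℝ) (hδ : 0 ≤ δ) (happrox : ∀ S : Finset ι, |g S - f S| ≤ δ)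
    (I : Finset ι) (ε : ℝ) (hε : 0 ≤ ε)
    (hstep : ∀ j ∉ I, g (I ∪ {j}) ≤ g I + ε) :
    ∀ J : Finset ι, I ⊆ J →
      g J ≤ g I + ((J \ I).card : ℝ) * (ε + 2 * δ) + 2 * δ := by
  have key : ∀ K : Finset ι, Disjoint I K →
      f (I ∪ K) ≤ f I + (K.card : ℝ) * (ε + 2 * δ) := by
    intro K
    induction K using Finset.induction_on with
    | empty => intro _; simp
    | insert a K ha ih =>
      intro hd
      rw [Finset.disjoint_insert_right] at hd
      obtain ⟨haI, hd⟩ := hd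
      have h1 := ih hd
      have h2 := hsub (I ∪ K) (I ∪ {a})
      have e1 : (I ∪ K) ∪ (I ∪ {a}) = I ∪ insert a K := by
        ext x; simp only [Finset.mem_union, Finset.mem_insert, Finset.mem_singleton]; tauto
      have e2 : (I ∪ K) ∩ (I ∪ {a}) = I := by
        rw [← Finset.union_inter_distrib_left, Finset.inter_singleton_of_notMem ha,
          Finset.union_empty]
      rw [e1, e2] at h2
      have h3 := hstep a haI
      have h4 := abs_le.mp (happrox (I ∪ {a}))
      have h5 := abs_le.mp (happrox I)
      rw [Finset.card_insert_of_notMem ha]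
      push_cast
      linarith [h4.1, h5.2]
  intro J hJ
  have h := key (J \ I) Finset.disjoint_sdiff
  rw [Finset.union_sdiff_of_subset hJ] at h
  have h4 := abs_le.mp (happrox J)
  have h5 := abs_le.mp (happrox I)
  linarith [h4.2, h5.1]
end
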